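/- For all X, Y ∈ 𝒞, the series Σ_{g∈G} L_g·π(L_g*X)·π(L_g*Y) converges unconditionally in the operator norm, with sum X ⋆ Y; i.e. the net of finite partial sums Σ_{g∈K} L_g X_g Y_g (over finite K ⊆ G directed by inclusion) converges in norm to X ⋆ Y, where X_g = π(L_g*X) and Y_g = π(L_g*Y). -/

import Mathlib

set_option synthInstance.maxHeartbeats 1000000
set_option maxHeartbeats 1000000

open scoped InnerProductSpace
open ContinuousLinearMap

noncomputable section

/-- `l2 G H` is the Hilbert space `ℓ²(G,H)` of square-summable `H`-valued functions on `G`. -/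
abbrev l2 (G : Type) (H : Type) [NormedAddCommGroup H] : Type := lp (fun _ : G => H) 2

/-- The Hadamard product `X ⋆ Y := V* ∘ ρ(X) ∘ F ∘ ρ(Y) ∘ V`. -/
def hadamard {H : Type} [NormedAddCommGroup H] [InnerProductSpace ℂ H] [CompleteSpace H]
    {G : Type}
    (ρ : (l2 G H →L[ℂ] l2 G H) → (l2 G (l2 G H) →L[ℂ] l2 G (l2 G H)))
    (V : l2 G H →L[ℂ] l2 G (l2 G H))
    (F : l2 G (l2 G H) →L[ℂ] l2 G (l2 G H))
    (X Y : l2 G H →L[ℂ] l2 G H) : l2 G H →L[ℂ] l2 G H :=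
  adjoint V ∘L (ρ X ∘L (F ∘L (ρ Y ∘L V)))

/-!
Matricially, `(X ⋆ Y)_{ab} = X_{ab} Y_{ab}`, and the `g`-th term of the series is the part of this
matrix on the diagonal `a b⁻¹ = g`. Cutting a single operator down to a finite set `K` of diagonals
is not bounded uniformly in `K`; on `ℓ²(G, ℓ²(G, H))`, however, the same cut is a coordinate
projection `Q_K`, hence a contraction. Since `X ⋆ Y = (V* ρ(X)) (F ρ(Y) V)` and the partial sum over
`K` is `(V* ρ(X)) Q_K (F ρ(Y) V)`, it suffices that `V* ρ(X) Q_K → V* ρ(X)` in norm. When `X` lives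
on finitely many diagonals the net is eventually constant, and equicontinuity in `X` extends the
convergence to norm limits of such `X`.
-/

open Filter Topology
open scoped ENNReal Pointwise lp

section Coordinatewise

variable {𝕜 ι : Type*} [NontriviallyNormedField 𝕜] {p : ℝ≥0∞} [Fact (1 ≤ p)]
  {E : ι → Type*} [∀ i, NormedAddCommGroup (E i)] [∀ i, NormedSpace 𝕜 (E i)]

variable (𝕜) in
open Classical in
/-- The coordinate projection of `ℓᵖ` onto the sequences supported in `s`. -/
def coordinateProjection (s : Set ι) : lp E p →L[𝕜] lp E p :=
  lp.mapCLM p (fun i => if i ∈ s then .id 𝕜 (E i) else 0) zero_le_one fun i => by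
    split_ifs
    · exact norm_id_le
    · simp only [norm_zero, zero_le_one]

open Classical in
theorem coordinateProjection_apply (s : Set ι) (x : lp E p) (i : ι) :
    coordinateProjection 𝕜 s x i = if i ∈ s then x i else 0 := by
  change (if i ∈ s then ContinuousLinearMap.id 𝕜 (E i) else 0) (x i) = _
  split_ifs <;> rfl

theorem norm_coordinateProjection_le (s : Set ι) :
    ‖(coordinateProjection 𝕜 s : lp E p →L[𝕜] lp E p)‖ ≤ 1 :=
  lp.norm_mapCLM_le ..

variable {M : Type*} [NormedAddCommGroup M] [NormedSpace 𝕜 M]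

theorem norm_evalCLM_comp_le (X : M →L[𝕜] lp E p) (i : ι) : ‖lp.evalCLM 𝕜 E p i ∘L X‖ ≤ ‖X‖ :=
  opNorm_le_bound _ (norm_nonneg X) fun v =>
    (lp.norm_apply_le_norm (zero_lt_one.trans_le Fact.out).ne' (X v) i).trans (X.le_opNorm v)

/-- The operator `Ξ ↦ (i ↦ (X (Ξ i)) i)` attached to `X`, as a continuous linear function of `X`.
For `E i = H` and `M = ℓ²(G, H)` it is `V* ρ(X)`. -/
def diagonalApply : (M →L[𝕜] lp E p) →L[𝕜] (ℓ^p(ι, M) →L[𝕜] lp E p) :=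
  LinearMap.mkContinuous
    { toFun X := lp.mapCLM p (fun i => lp.evalCLM 𝕜 E p i ∘L X) (norm_nonneg X)
        (norm_evalCLM_comp_le X)
      map_add' _ _ := rfl
      map_smul' _ _ := rfl }
    1 fun X => by
      rw [one_mul]
      exact lp.norm_mapCLM_le p _ (norm_nonneg X) (norm_evalCLM_comp_le X)

theorem diagonalApply_apply (X : M →L[𝕜] lp E p) (Ξ : ℓ^p(ι, M)) (i : ι) :
    diagonalApply X Ξ i = X (Ξ i) i :=
  rfl

theorem norm_diagonalApply_le (X : M →L[𝕜] lp E p) :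
    ‖(diagonalApply X : ℓ^p(ι, M) →L[𝕜] lp E p)‖ ≤ ‖X‖ :=
  lp.norm_mapCLM_le p _ (norm_nonneg X) (norm_evalCLM_comp_le X)

end Coordinatewise

section Propagation

variable {𝕜 G H : Type*} [NontriviallyNormedField 𝕜] [Group G] {p : ℝ≥0∞} [Fact (1 ≤ p)]
  [NormedAddCommGroup H] [NormedSpace 𝕜 H]

/-- The matrix of `X` is supported on the diagonals `a b⁻¹ = g` with `g ∈ S`. This is encoded
without matrix entries: the `a`-th coordinate of `X x` vanishes as soon as `x` does on `S⁻¹ a`. -/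
def HasPropagationIn (S : Set G) (X : ℓ^p(G, H) →L[𝕜] ℓ^p(G, H)) : Prop :=
  ∀ (x : ℓ^p(G, H)) (a : G), (∀ b, a * b⁻¹ ∈ S → x b = 0) → X x a = 0

namespace HasPropagationIn

variable {S T : Set G} {X Y : ℓ^p(G, H) →L[𝕜] ℓ^p(G, H)}

protected theorem algebraMap (c : 𝕜) :
    HasPropagationIn {1} (algebraMap 𝕜 (ℓ^p(G, H) →L[𝕜] ℓ^p(G, H)) c) := by
  intro x a hx
  change c • x a = 0
  rw [hx a (mul_inv_cancel a), smul_zero]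

protected theorem add (hX : HasPropagationIn S X) (hY : HasPropagationIn T Y) :
    HasPropagationIn (S ∪ T) (X + Y) := by
  intro x a hx
  change X x a + Y x a = 0
  rw [hX x a fun b hb => hx b (.inl hb), hY x a fun b hb => hx b (.inr hb), add_zero]

protected theorem mul (hX : HasPropagationIn S X) (hY : HasPropagationIn T Y) :
    HasPropagationIn (S * T) (X * Y) := by
  refine fun x a hx => hX (Y x) a fun c hc => hY x c fun b hb => hx b ?_
  simpa only [mul_assoc, inv_mul_cancel_left] using Set.mul_mem_mul hc hb

end HasPropagationIn

variable (𝕜) in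
/-- The compression of a `G × G`-matrix of vectors, i.e. of an element of `ℓᵖ(G, ℓᵖ(G, H))`, to the
diagonals `a b⁻¹ = g` with `g ∈ S`. -/
def diagonalsProjection (S : Set G) : ℓ^p(G, ℓ^p(G, H)) →L[𝕜] ℓ^p(G, ℓ^p(G, H)) :=
  lp.mapCLM p (fun a => coordinateProjection 𝕜 {b | a * b⁻¹ ∈ S}) zero_le_one
    fun _ => norm_coordinateProjection_le _

open Classical in
theorem diagonalsProjection_apply (S : Set G) (Ξ : ℓ^p(G, ℓ^p(G, H))) (a b : G) :
    diagonalsProjection 𝕜 S Ξ a b = if a * b⁻¹ ∈ S then Ξ a b else 0 :=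
  coordinateProjection_apply {b | a * b⁻¹ ∈ S} (Ξ a) b

theorem norm_diagonalsProjection_le (S : Set G) :
    ‖(diagonalsProjection 𝕜 S : ℓ^p(G, ℓ^p(G, H)) →L[𝕜] _)‖ ≤ 1 :=
  lp.norm_mapCLM_le ..

theorem diagonalsProjection_singleton_apply [DecidableEq G] (g a : G) (Ξ : ℓ^p(G, ℓ^p(G, H))) :
    diagonalsProjection 𝕜 {g} Ξ a = lp.single p (g⁻¹ * a) (Ξ a (g⁻¹ * a)) := by
  ext b
  rw [diagonalsProjection_apply, Set.mem_singleton_iff]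
  split_ifs with hab
  · obtain rfl : b = g⁻¹ * a := by rw [← hab]; group
    rw [lp.single_apply_self]
  · rw [lp.single_apply_ne]
    rintro rfl
    exact hab (by group)

theorem sum_diagonalsProjection_singleton (K : Finset G) :
    ∑ g ∈ K, diagonalsProjection 𝕜 {g} =
      (diagonalsProjection 𝕜 K : ℓ^p(G, ℓ^p(G, H)) →L[𝕜] _) := by
  classical
  ext Ξ a b
  simp only [sum_apply, lp.coeFn_sum, Finset.sum_apply, diagonalsProjection_apply,
    Set.mem_singleton_iff, Finset.sum_ite_eq, Finset.mem_coe]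

theorem HasPropagationIn.diagonalApply_comp_diagonalsProjection {S T : Set G}
    {X : ℓ^p(G, H) →L[𝕜] ℓ^p(G, H)} (hX : HasPropagationIn S X)
    (hST : S ⊆ T) : diagonalApply X ∘L diagonalsProjection 𝕜 T = diagonalApply X := by
  ext Ξ a
  refine sub_eq_zero.1 ?_
  rw [comp_apply, diagonalApply_apply, diagonalApply_apply, ← Pi.sub_apply, ← lp.coeFn_sub,
    ← map_sub]
  refine hX _ a fun b hab => ?_
  rw [lp.coeFn_sub, Pi.sub_apply, diagonalsProjection_apply, if_pos (hST hab), sub_self]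

theorem equicontinuous_diagonalApply_comp_diagonalsProjection :
    Equicontinuous fun (S : Set G) (X : ℓ^p(G, H) →L[𝕜] ℓ^p(G, H)) =>
      diagonalApply X ∘L diagonalsProjection 𝕜 S := by
  let cut (S : Set G) :
      (ℓ^p(G, H) →L[𝕜] ℓ^p(G, H)) →L[𝕜] (ℓ^p(G, ℓ^p(G, H)) →L[𝕜] ℓ^p(G, H)) :=
    (diagonalsProjection 𝕜 S).precomp ℓ^p(G, H) ∘L diagonalApply
  have uniformBound : ∃ C, ∀ S X, ‖cut S X‖ ≤ C * ‖X‖ := by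
    refine ⟨1, fun S X => ?_⟩
    calc ‖cut S X‖
        ≤ ‖(diagonalApply X : ℓ^p(G, ℓ^p(G, H)) →L[𝕜] ℓ^p(G, H))‖ *
            ‖(diagonalsProjection 𝕜 S : ℓ^p(G, ℓ^p(G, H)) →L[𝕜] _)‖ := opNorm_comp_le _ _
      _ ≤ ‖X‖ * 1 := by
          gcongr
          exacts [norm_diagonalApply_le X, norm_diagonalsProjection_le S]
      _ = 1 * ‖X‖ := mul_comm _ _
  exact ((NormedSpace.equicontinuous_TFAE cut).out 1 3).2 uniformBound

theorem hasSum_diagonalApply_comp_diagonalsProjection_singleton {X : ℓ^p(G, H) →L[𝕜] ℓ^p(G, H)}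
    (hX : X ∈ closure {X | ∃ S : Set G, S.Finite ∧ HasPropagationIn S X}) :
    HasSum (fun g : G => diagonalApply X ∘L diagonalsProjection 𝕜 {g}) (diagonalApply X) := by
  have partialSum (K : Finset G) : ∑ g ∈ K, diagonalApply X ∘L diagonalsProjection 𝕜 {g} =
      diagonalApply X ∘L diagonalsProjection 𝕜 K := by
    rw [← sum_diagonalsProjection_singleton, comp_finsetSum]
  simp only [HasSum, partialSum, SummationFilter.unconditional_filter]
  refine closure_minimal ?_
    ((equicontinuous_diagonalApply_comp_diagonalsProjection.comp
      ((↑) : Finset G → Set G)).isClosed_setOfPred_tendsto diagonalApply.continuous) hX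
  rintro X ⟨S, hS, hX⟩
  refine tendsto_const_nhds.congr' ?_
  filter_upwards [eventually_ge_atTop hS.toFinset] with K hK
  exact (hX.diagonalApply_comp_diagonalsProjection (hS.toFinset_subset.1 hK)).symm

end Propagation

section Hilbert

variable {𝕜 : Type*} [RCLike 𝕜]

section Family

variable {ι : Type*} [DecidableEq ι] {E : ι → Type*} [∀ i, NormedAddCommGroup (E i)]
  [∀ i, InnerProductSpace 𝕜 (E i)]

theorem blockDiagonalCompression_apply {X D : lp E 2 →L[𝕜] lp E 2}
    (hD : ∀ ξ η : lp E 2,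
      ⟪D ξ, η⟫_𝕜 = ∑' i, ⟪X (lp.single 2 i (ξ i)), lp.single 2 i (η i)⟫_𝕜)
    (ξ : lp E 2) (i : ι) : D ξ i = X (lp.single 2 i (ξ i)) i := by
  refine ext_inner_right 𝕜 fun w => ?_
  rw [← lp.inner_single_right, hD, tsum_eq_single i, lp.single_apply_self,
    lp.inner_single_right]
  intro j hj
  rw [lp.single_apply_ne _ _ _ hj, lp.single_zero, inner_zero_right]

theorem adjoint_diagonalEmbedding_apply [∀ i, CompleteSpace (E i)]
    {V : lp E 2 →L[𝕜] ℓ²(ι, lp E 2)} (hV : ∀ ξ i, V ξ i = lp.single 2 i (ξ i))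
    (Ξ : ℓ²(ι, lp E 2)) (i : ι) : adjoint V Ξ i = Ξ i i := by
  refine ext_inner_right 𝕜 fun w => ?_
  rw [← lp.inner_single_right, adjoint_inner_left, lp.inner_eq_tsum, tsum_eq_single i, hV,
    lp.single_apply_self, lp.inner_single_right]
  intro j hj
  rw [hV, lp.single_apply_ne _ _ _ hj, lp.single_zero, inner_zero_right]

end Family

variable {G H : Type*} [Group G] [NormedAddCommGroup H] [InnerProductSpace 𝕜 H]

theorem leftTranslation_single [DecidableEq G] {L : ℓ²(G, H) →L[𝕜] ℓ²(G, H)} {g : G}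
    (hL : ∀ ξ h, L ξ h = ξ (g⁻¹ * h)) (h : G) (v : H) :
    L (lp.single 2 h v) = lp.single 2 (g * h) v := by
  ext k
  simp only [hL, lp.single_apply, Pi.single_apply, inv_mul_eq_iff_eq_mul]

theorem star_leftTranslation_apply [CompleteSpace H] {L : ℓ²(G, H) →L[𝕜] ℓ²(G, H)} {g : G}
    (hL : ∀ ξ h, L ξ h = ξ (g⁻¹ * h)) (ξ : ℓ²(G, H)) (h : G) :
    star L ξ h = ξ (g * h) := by
  classical
  refine ext_inner_right 𝕜 fun w => ?_
  rw [← lp.inner_single_right, ← lp.inner_single_right, star_eq_adjoint, adjoint_inner_left,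
    leftTranslation_single hL]

protected theorem HasPropagationIn.star [CompleteSpace H] {S : Set G}
    {X : ℓ²(G, H) →L[𝕜] ℓ²(G, H)} (hX : HasPropagationIn S X) :
    HasPropagationIn S⁻¹ (star X) := by
  classical
  intro x a hx
  refine ext_inner_right 𝕜 fun w => ?_
  rw [← lp.inner_single_right, star_eq_adjoint, adjoint_inner_left, lp.inner_eq_tsum,
    inner_zero_left]
  have vanishes (b : G) : ⟪x b, X (lp.single 2 a w) b⟫_𝕜 = 0 := by
    by_cases hba : b * a⁻¹ ∈ S
    · rw [hx b (by simpa using hba), inner_zero_left]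
    · rw [hX _ b, inner_zero_right]
      intro c hc
      exact lp.single_apply_ne _ _ _ fun hca => hba (hca ▸ hc)
  simp only [vanishes, tsum_zero]

variable (𝕜 G H) in
/-- The star algebra of operators on `ℓ²(G, H)` whose matrix is supported on finitely many diagonals
`a b⁻¹ = g`. Its norm closure contains `C*_r(𝒜, α, G)` for every action `α` of `G` on an algebra
`𝒜` of operators on `H`. -/
def finitePropagation [CompleteSpace H] :
    StarSubalgebra 𝕜 (ℓ²(G, H) →L[𝕜] ℓ²(G, H)) where
  carrier := {X | ∃ S : Set G, S.Finite ∧ HasPropagationIn S X}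
  mul_mem' := fun ⟨_, hS, hX⟩ ⟨_, hT, hY⟩ => ⟨_, hS.mul hT, hX.mul hY⟩
  add_mem' := fun ⟨_, hS, hX⟩ ⟨_, hT, hY⟩ => ⟨_, hS.union hT, hX.add hY⟩
  algebraMap_mem' c := ⟨_, Set.finite_singleton 1, .algebraMap c⟩
  star_mem' := fun ⟨_, hS, hX⟩ => ⟨_, hS.inv, hX.star⟩

theorem mem_finitePropagation_of_forall_apply_eq [CompleteSpace H]
    {X : ℓ²(G, H) →L[𝕜] ℓ²(G, H)} {A : G → H →L[𝕜] H}
    (hX : ∀ ξ g, X ξ g = A g (ξ g)) : X ∈ finitePropagation 𝕜 G H :=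
  ⟨{1}, Set.finite_singleton 1, fun ξ a hξ => by rw [hX, hξ a (mul_inv_cancel a), map_zero]⟩

theorem leftTranslation_mem_finitePropagation [CompleteSpace H]
    {L : ℓ²(G, H) →L[𝕜] ℓ²(G, H)} {g : G}
    (hL : ∀ ξ h, L ξ h = ξ (g⁻¹ * h)) : L ∈ finitePropagation 𝕜 G H :=
  ⟨{g}, Set.finite_singleton g, fun ξ a hξ => by rw [hL, hξ _ (by simp)]⟩

theorem leftTranslation_mul_fourierCoefficients [CompleteSpace H] [DecidableEq G] {g : G}
    {L X Y Xg Yg : ℓ²(G, H) →L[𝕜] ℓ²(G, H)}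
    {W : ℓ²(G, H) →L[𝕜] ℓ²(G, ℓ²(G, H))}
    (hL : ∀ ξ h, L ξ h = ξ (g⁻¹ * h))
    (hX : ∀ ξ h, Xg ξ h = (star L * X) (lp.single 2 h (ξ h)) h)
    (hY : ∀ ξ h, Yg ξ h = (star L * Y) (lp.single 2 h (ξ h)) h)
    (hW : ∀ ξ a b, W ξ a b = Y (lp.single 2 b (ξ b)) a) :
    L * (Xg * Yg) = (diagonalApply X ∘L diagonalsProjection 𝕜 {g}) ∘L W := by
  ext ξ a
  calc (L * (Xg * Yg)) ξ a
      = (star L * X) (lp.single 2 (g⁻¹ * a)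
          ((star L * Y) (lp.single 2 (g⁻¹ * a) (ξ (g⁻¹ * a))) (g⁻¹ * a))) (g⁻¹ * a) := by
        rw [mul_apply_eq_comp, mul_apply_eq_comp, hL, hX, hY]
    _ = X (lp.single 2 (g⁻¹ * a) (Y (lp.single 2 (g⁻¹ * a) (ξ (g⁻¹ * a))) a)) a := by
        simp only [mul_apply_eq_comp, star_leftTranslation_apply hL, mul_inv_cancel_left]
    _ = ((diagonalApply X ∘L diagonalsProjection 𝕜 {g}) ∘L W) ξ a := by
        rw [comp_apply, comp_apply, diagonalApply_apply, diagonalsProjection_singleton_apply, hW]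

end Hilbert

theorem hadamard_eq_diagonalApply_comp {H : Type} [NormedAddCommGroup H] [InnerProductSpace ℂ H]
    [CompleteSpace H] {G : Type} [DecidableEq G]
    {ρ : (l2 G H →L[ℂ] l2 G H) → (l2 G (l2 G H) →L[ℂ] l2 G (l2 G H))}
    (hρ : ∀ X Ξ g, ρ X Ξ g = X (Ξ g))
    {V : l2 G H →L[ℂ] l2 G (l2 G H)} (hV : ∀ ξ g, V ξ g = lp.single 2 g (ξ g))
    (F : l2 G (l2 G H) →L[ℂ] l2 G (l2 G H)) (X Y : l2 G H →L[ℂ] l2 G H) :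
    hadamard ρ V F X Y = diagonalApply X ∘L (F ∘L (ρ Y ∘L V)) := by
  ext ξ a
  calc hadamard ρ V F X Y ξ a
      = ρ X (F (ρ Y (V ξ))) a a := adjoint_diagonalEmbedding_apply hV _ a
    _ = X (F (ρ Y (V ξ)) a) a := by rw [hρ]

theorem hadamard_stmt11_general
    {H : Type} [NormedAddCommGroup H] [InnerProductSpace ℂ H] [CompleteSpace H]
    {G : Type} [Group G] [DecidableEq G]
    (L : G → (l2 G H →L[ℂ] l2 G H)) (hL : ∀ g ξ h, L g ξ h = ξ (g⁻¹ * h))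
    (π : (l2 G H →L[ℂ] l2 G H) → (l2 G H →L[ℂ] l2 G H))
    (hπ : ∀ (X : l2 G H →L[ℂ] l2 G H) (ξ η : l2 G H),
      ⟪π X ξ, η⟫_ℂ = ∑' g : G, ⟪X (lp.single 2 g (ξ g)), lp.single 2 g (η g)⟫_ℂ)
    (ρ : (l2 G H →L[ℂ] l2 G H) → (l2 G (l2 G H) →L[ℂ] l2 G (l2 G H)))
    (hρ : ∀ X Ξ g, ρ X Ξ g = X (Ξ g))
    (V : l2 G H →L[ℂ] l2 G (l2 G H)) (hV : ∀ ξ g, V ξ g = lp.single 2 g (ξ g))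
    (F : l2 G (l2 G H) →L[ℂ] l2 G (l2 G H)) (hF : ∀ Ξ g h, F Ξ g h = Ξ h g)
    {X : l2 G H →L[ℂ] l2 G H} (hX : X ∈ (finitePropagation ℂ G H).topologicalClosure)
    (Y : l2 G H →L[ℂ] l2 G H) :
    HasSum (fun g : G => L g * (π (star (L g) * X) * π (star (L g) * Y)))
      (hadamard ρ V F X Y) := by
  have entries (ξ : l2 G H) (a b : G) :
      (F ∘L (ρ Y ∘L V)) ξ a b = Y (lp.single 2 b (ξ b)) a := by
    simp only [comp_apply, hF, hρ, hV]
  have term_eq (g : G) := leftTranslation_mul_fourierCoefficients (hL g)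
    (blockDiagonalCompression_apply (hπ (star (L g) * X)))
    (blockDiagonalCompression_apply (hπ (star (L g) * Y))) entries
  simp only [term_eq, hadamard_eq_diagonalApply_comp hρ hV]
  exact (hasSum_diagonalApply_comp_diagonalsProjection_singleton hX).mapL
    ((F ∘L (ρ Y ∘L V)).precomp (l2 G H))

theorem hadamard_stmt11
    {H : Type} [NormedAddCommGroup H] [InnerProductSpace ℂ H] [CompleteSpace H]
    {G : Type} [Group G] [DecidableEq G]
    (𝒜 : StarSubalgebra ℂ (H →L[ℂ] H))
    (h𝒜 : IsClosed (𝒜 : Set (H →L[ℂ] H)))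
    (hnd : Dense (↑(Submodule.span ℂ {v : H | ∃ A ∈ 𝒜, ∃ w : H, v = A w}) : Set H))
    (α : G → (𝒜 ≃⋆ₐ[ℂ] 𝒜))
    (hα1 : ∀ A, α 1 A = A)
    (hαmul : ∀ g h A, α (g * h) A = α g (α h A))
    (Ψ : 𝒜 → (l2 G H →L[ℂ] l2 G H))
    (hΨ : ∀ (A : 𝒜) (ξ : l2 G H) (g : G),
      (Ψ A ξ : ∀ _ : G, H) g = ((α g⁻¹ A : 𝒜) : H →L[ℂ] H) ((ξ : ∀ _ : G, H) g))
    (L : G → (l2 G H →L[ℂ] l2 G H))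
    (hL : ∀ (g : G) (ξ : l2 G H) (h : G),
      (L g ξ : ∀ _ : G, H) h = (ξ : ∀ _ : G, H) (g⁻¹ * h))
    (𝒞 : Set (l2 G H →L[ℂ] l2 G H))
    (h𝒞 : 𝒞 = ((StarAlgebra.adjoin ℂ
        (Set.range Ψ ∪ Set.range L)).topologicalClosure : Set _))
    (π : (l2 G H →L[ℂ] l2 G H) → (l2 G H →L[ℂ] l2 G H))
    (hπ : ∀ (X : l2 G H →L[ℂ] l2 G H) (ξ η : l2 G H), ⟪π X ξ, η⟫_ℂ =
      ∑' g : G, ⟪X (lp.single 2 g ((ξ : ∀ _ : G, H) g)),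
        lp.single 2 g ((η : ∀ _ : G, H) g)⟫_ℂ)
    (ρ : (l2 G H →L[ℂ] l2 G H) → (l2 G (l2 G H) →L[ℂ] l2 G (l2 G H)))
    (hρ : ∀ (X : l2 G H →L[ℂ] l2 G H) (Ξ : l2 G (l2 G H)) (g : G),
      (ρ X Ξ : ∀ _ : G, l2 G H) g = X ((Ξ : ∀ _ : G, l2 G H) g))
    (V : l2 G H →L[ℂ] l2 G (l2 G H))
    (hV : ∀ (ξ : l2 G H) (g : G),
      (V ξ : ∀ _ : G, l2 G H) g = lp.single 2 g ((ξ : ∀ _ : G, H) g))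
    (F : l2 G (l2 G H) →L[ℂ] l2 G (l2 G H))
    (hF : ∀ (Ξ : l2 G (l2 G H)) (g h : G),
      ((F Ξ : ∀ _ : G, l2 G H) g : ∀ _ : G, H) h
        = ((Ξ : ∀ _ : G, l2 G H) h : ∀ _ : G, H) g)
    :
    ∀ X ∈ 𝒞, ∀ Y ∈ 𝒞,
      HasSum (fun g : G => L g * (π (star (L g) * X) * π (star (L g) * Y)))
        (hadamard ρ V F X Y) := by
  have generators : Set.range Ψ ∪ Set.range L ⊆ finitePropagation ℂ G H := by
    rintro _ (⟨A, rfl⟩ | ⟨g, rfl⟩)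
    · exact mem_finitePropagation_of_forall_apply_eq (hΨ A)
    · exact leftTranslation_mem_finitePropagation (hL g)
  subst h𝒞
  intro X hX Y _
  exact hadamard_stmt11_general L hL π hπ ρ hρ V hV F hF
    (StarSubalgebra.topologicalClosure_mono (StarAlgebra.adjoin_le generators) hX) Y
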